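/- The number of permutations σ ∈ S_n whose decoration-free schedule numbers are all equal to 1 (i.e., the decorated permutation (σ, ∅) has schedule 1^n) equals the number of alternating permutations of {1,…,n}, that is, the Euler number E_n. -/

import Mathlib

/-!
Write `σ₀ = 0`, and view the values `0, …, n` as points on a circle.

*Schedule side.* In a run `a₁ > a₂ > ⋯` preceded by the run `b₁ > ⋯ > b_m`, the entry `a_i` has
schedule number `(i - 1) + #{b < a_i}`. Hence all schedule numbers are `1` iff every run has length
at most two, an ascent `b_m < a₁` following a descent `b_{m-1} > b_m` satisfies `a₁ < b_{m-1}`, and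
a descent `a₁ > a₂` satisfies `a₂ < b_m`. Together these say that all consecutive triples
`σ_{i-1}, σ_i, σ_{i+1}` are positively oriented on the circle (`schedOne_iff`).

*Encoding.* Both classes of permutations are encoded by the sequences `(c_0, …, c_{n-1})` with
`0 ≤ c_k ≤ k`. For the circular class, `c_k` counts the `j < k` such that `σ_j` lies in the open arc
from `σ_k` to `σ_{k+1}` (`codeC`); for the alternating class, `c_k` counts the `σ_j` with
`1 ≤ j ≤ k` that are smaller or greater than `σ_{k+1}`, according to the parity of `k` (`codeA`).
In both cases the code determines successively the relative order of every prefix, so the encoding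
is injective, hence bijective since there are `n!` codes. In both cases the defining condition
of the class becomes the same condition `c_{k+1} + c_k ≤ k` on codes (`codeC_cond`,
`codeA_cond`), which is the recursion of the Entringer numbers. Composing one encoding with the
inverse of the other gives the bijection.
-/

open Finset

namespace QEuler

/-! ### Entries of a permutation of `{1,…,n}`, with the convention `σ₀ = 0`.
A permutation `σ ∈ S_n` is represented by `Equiv.Perm (Fin n)`; its entry at
position `i ∈ {1,…,n}` is `(σ (i-1)).val + 1 ∈ {1,…,n}`, and all other
positions (in particular position `0`) carry the value `0`. -/

def ent {n : ℕ} (σ : Equiv.Perm (Fin n)) (i : ℕ) : ℕ :=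
  if h : 1 ≤ i ∧ i ≤ n then ((σ ⟨i - 1, by omega⟩ : Fin n) : ℕ) + 1 else 0

/-- Decorations: a set `D : Finset (Fin n)` records the decorated positions,
`j : Fin n` encoding position `j+1 ∈ {1,…,n}`.  `isDec D i` tells whether
position `i` is decorated (position `0` never is). -/
def isDec {n : ℕ} (D : Finset (Fin n)) (i : ℕ) : Bool :=
  if h : 1 ≤ i ∧ i ≤ n then decide ((⟨i - 1, by omega⟩ : Fin n) ∈ D) else false

/-- Number of decorated positions among `{1,…,n}` for a decoration predicate. -/
def decCount (n : ℕ) (D : ℕ → Bool) : ℕ :=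
  ((Finset.Icc 1 n).filter fun i => D i = true).card

/-! ### Major index and reverse major index -/

/-- Major index of the word `E 1, E 2, …, E n`. -/
def maj (n : ℕ) (E : ℕ → ℕ) : ℕ :=
  ∑ i ∈ Finset.Icc 1 (n - 1), if E (i + 1) < E i then i else 0

/-- Reverse major index: the major index of the reversed word `E n, …, E 1`. -/
def revmaj (n : ℕ) (E : ℕ → ℕ) : ℕ := maj n fun i => E (n + 1 - i)

/-! ### Decreasing runs and schedule numbers -/

/-- The word is strictly decreasing along consecutive positions `p,…,q`. -/
def decOn (E : ℕ → ℕ) (p q : ℕ) : Prop := ∀ t ∈ Finset.Ico p q, E (t + 1) < E t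

instance (E : ℕ → ℕ) (p q : ℕ) : Decidable (decOn E p q) := by
  unfold decOn; infer_instance

/-- Start of the maximal strictly decreasing consecutive run containing position `i`. -/
def runStart (E : ℕ → ℕ) (i : ℕ) : ℕ :=
  Nat.find (show ∃ p, decOn E p i from ⟨i, fun t ht => absurd ht (by simp)⟩)

/-- End of the maximal strictly decreasing consecutive run containing position `i`
(positions are `0,…,n`). -/
def runEnd (n : ℕ) (E : ℕ → ℕ) (i : ℕ) : ℕ :=
  Nat.findGreatest (fun q => decOn E i q) n

/-- The schedule number of a decorated permutation (given by its entry word `E` on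
positions `0,…,n`, with `E 0 = 0`, and decoration predicate `D`) at position `i`.
If `σ_i` is undecorated and lies in run `r_j` it counts the undecorated entries of `r_j`
larger than `σ_i` plus the undecorated entries of `r_{j-1}` smaller than `σ_i`;
if `σ_i` is decorated it counts the undecorated entries of `r_j` smaller than `σ_i`
plus the undecorated entries of `r_{j+1}` larger than `σ_i`. -/
def schedNum (n : ℕ) (E : ℕ → ℕ) (D : ℕ → Bool) (i : ℕ) : ℕ :=
  if D i = true then
    ((Finset.Icc (runStart E i) (runEnd n E i)).filter fun t => D t = false ∧ E t < E i).card
      + (if runEnd n E i < n then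
          ((Finset.Icc (runEnd n E i + 1) (runEnd n E (runEnd n E i + 1))).filter
            fun t => D t = false ∧ E i < E t).card
        else 0)
  else
    ((Finset.Icc (runStart E i) (runEnd n E i)).filter fun t => D t = false ∧ E i < E t).card
      + (if runStart E i = 0 then 0 else
          ((Finset.Icc (runStart E (runStart E i - 1)) (runStart E i - 1)).filter
            fun t => D t = false ∧ E t < E i).card)

/-! ### Cyclic runs -/

/-- `σ_i,…,σ_j` is a cyclic (decreasing) run: for some shift `k`, the residues
`σ_t + k (mod n+1)` are strictly decreasing for `t = i,…,j`. -/
def IsCyclicRun (n : ℕ) (E : ℕ → ℕ) (i j : ℕ) : Prop :=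
  i ≤ j ∧ j ≤ n ∧ ∃ k : ℕ, ∀ t ∈ Finset.Ico i j, (E (t + 1) + k) % (n + 1) < (E t + k) % (n + 1)

/-- A cyclic run which cannot be extended to the left. -/
def LeftMaximalRun (n : ℕ) (E : ℕ → ℕ) (i j : ℕ) : Prop :=
  IsCyclicRun n E i j ∧ (i = 0 ∨ ¬ IsCyclicRun n E (i - 1) j)

/-- A cyclic run which cannot be extended to the right. -/
def RightMaximalRun (n : ℕ) (E : ℕ → ℕ) (i j : ℕ) : Prop :=
  IsCyclicRun n E i j ∧ (j = n ∨ ¬ IsCyclicRun n E i (j + 1))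

/-! ### Double ascents, descents, peaks, valleys; `inv3` and `monot` -/

def DblAsc (E : ℕ → ℕ) (j : ℕ) : Prop := E (j - 2) < E (j - 1) ∧ E (j - 1) < E j
def DblDesc (E : ℕ → ℕ) (j : ℕ) : Prop := E (j - 1) < E (j - 2) ∧ E j < E (j - 1)
def IsPeak (E : ℕ → ℕ) (j : ℕ) : Prop := E (j - 2) < E (j - 1) ∧ E j < E (j - 1)
def IsValley (E : ℕ → ℕ) (j : ℕ) : Prop := E (j - 1) < E (j - 2) ∧ E (j - 1) < E j

instance (E : ℕ → ℕ) (j : ℕ) : Decidable (DblAsc E j) := by unfold DblAsc; infer_instance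
instance (E : ℕ → ℕ) (j : ℕ) : Decidable (DblDesc E j) := by unfold DblDesc; infer_instance
instance (E : ℕ → ℕ) (j : ℕ) : Decidable (IsPeak E j) := by unfold IsPeak; infer_instance
instance (E : ℕ → ℕ) (j : ℕ) : Decidable (IsValley E j) := by unfold IsValley; infer_instance

/-- `(i,j)` is a 3-inversion. -/
def Inv3Pair (E : ℕ → ℕ) (i j : ℕ) : Prop :=
  (DblAsc E j ∧ E (j - 1) < E i ∧ E i < E j) ∨
  (DblDesc E j ∧ E j < E i ∧ E i < E (j - 1)) ∨
  (IsPeak E j ∧ E j < E i) ∨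
  (IsValley E j ∧ E i < E j)

instance (E : ℕ → ℕ) (i j : ℕ) : Decidable (Inv3Pair E i j) := by
  unfold Inv3Pair; infer_instance

/-- Number of 3-inversions of the word `E 1, …, E n` (with the convention `E 0 = 0`). -/
def inv3 (n : ℕ) (E : ℕ → ℕ) : ℕ :=
  ((Finset.Icc 1 n ×ˢ Finset.Icc 1 n).filter fun p => p.1 < p.2 ∧ Inv3Pair E p.1 p.2).card

/-- Number of double ascents and double descents. -/
def monot (n : ℕ) (E : ℕ → ℕ) : ℕ :=
  ((Finset.Icc 2 n).filter fun j => DblAsc E j ∨ DblDesc E j).card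

/-! ### Alternating permutations, `31-2` patterns and Chebikin's statistic -/

/-- `σ₁ > σ₂ < σ₃ > ⋯`. -/
def IsAlternating (n : ℕ) (E : ℕ → ℕ) : Prop :=
  ∀ i ∈ Finset.Icc 1 (n - 1), if Odd i then E (i + 1) < E i else E i < E (i + 1)

instance (n : ℕ) (E : ℕ → ℕ) : Decidable (IsAlternating n E) := by
  unfold IsAlternating; infer_instance

/-- The finset of alternating permutations of `{1,…,n}`. -/
def altPerms (n : ℕ) : Finset (Equiv.Perm (Fin n)) :=
  Finset.univ.filter fun σ => IsAlternating n (ent σ)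

/-- Number of `31-2` patterns: pairs `(i,j)` with `i+1 < j ≤ n` and `σ_j > σ_i > σ_{i+1}`. -/
def pat312 (n : ℕ) (E : ℕ → ℕ) : ℕ :=
  ((Finset.Icc 1 n ×ˢ Finset.Icc 1 n).filter fun p =>
    p.1 + 1 < p.2 ∧ E (p.1 + 1) < E p.1 ∧ E p.1 < E p.2).card

/-- Chebikin's alternating inversion statistic `î`. -/
def chebi (n : ℕ) (E : ℕ → ℕ) : ℕ :=
  ∑ i ∈ Finset.Icc 1 (n - 1),
    ((Finset.Icc (i + 1) n).filter fun j => if Odd i then E j < E i else E i < E j).card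

/-! ### Insertion `η_l`, structural attribute `ã`, the shift `k + τ` and `δ_k` -/

/-- The entry word of the insertion `η_l(σ) ∈ S_{n+1}` of the value `l` at the end of `σ ∈ S_n`. -/
def etaEnt (n l : ℕ) (E : ℕ → ℕ) (i : ℕ) : ℕ :=
  if i = n + 1 then l
  else if 1 ≤ i ∧ i ≤ n then (if l ≤ E i then E i + 1 else E i) else 0

/-- Structural attribute `ã(σ)` of `σ ∈ S_n`. -/
def atil (n : ℕ) (E : ℕ → ℕ) : ℕ :=
  if E (n - 1) < E n then n + 1 - E n else E n

/-- The entry word of `k + τ ∈ S_{n+1}` for `τ ∈ S_n`: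
`σ₀ = 0` and `σ_{i+1}` is the representative of `k + τ_i (mod n+1)` in `{1,…,n+1}`. -/
def shiftEnt (n k : ℕ) (E : ℕ → ℕ) (i : ℕ) : ℕ :=
  if i = 0 then 0
  else if (k + E (i - 1)) % (n + 1) = 0 then n + 1 else (k + E (i - 1)) % (n + 1)

/-- Position of the first (leftmost, among `1,…,n`) undecorated letter;
equals `n+1` if every position is decorated. -/
def firstUndecPos (n : ℕ) (D : ℕ → Bool) : ℕ :=
  Nat.find (show ∃ i, n < i ∨ (1 ≤ i ∧ D i = false) from ⟨n + 1, Or.inl (by omega)⟩)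

/-- `a(τ)`: the value of the first undecorated letter of `τ`. -/
def aVal (n : ℕ) (E : ℕ → ℕ) (D : ℕ → Bool) : ℕ := E (firstUndecPos n D)

/-- Decorations of the `k`-th descendant `δ_k(τ)`: position `1` is decorated iff
`k > n+1-a(τ)`, and for `i ≥ 2` position `i` is decorated iff position `i-1` of `τ` is. -/
def deltaDec (n k : ℕ) (D : ℕ → Bool) (aval : ℕ) (i : ℕ) : Bool :=
  if i = 0 then false
  else if i = 1 then decide (n + 1 - aval < k)
  else D (i - 1)

/-! ### Valley-decorated standardly labelled Dyck paths

A path of size `n` is encoded by its area word `a : Fin n → Fin n`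
(`a i` = number of whole squares between the `(i+1)`-st north step and the diagonal;
a word `a₁ ⋯ a_n` is the area word of a Dyck path iff `a₁ = 0` and `a_i ≤ a_{i-1} + 1`),
its labelling `w : Equiv.Perm (Fin n)`, and its decoration set `dv : Finset (Fin n)`
(`j` encoding the position `j+1`). -/

abbrev PathData (n : ℕ) := (Fin n → Fin n) × Equiv.Perm (Fin n) × Finset (Fin n)

/-- The area word, on positions `1,…,n`. -/
def aw {n : ℕ} (P : PathData n) (i : ℕ) : ℕ :=
  if h : 1 ≤ i ∧ i ≤ n then ((P.1 ⟨i - 1, by omega⟩ : Fin n) : ℕ) else 0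

/-- The labels, on positions `1,…,n`. -/
def lbl {n : ℕ} (P : PathData n) (i : ℕ) : ℕ := ent P.2.1 i

/-- Whether the `i`-th north step is decorated. -/
def pdec {n : ℕ} (P : PathData n) (i : ℕ) : Bool := isDec P.2.2 i

/-- The `i`-th north step is a contractible valley: `a_{i-1} > a_i`, or
`a_{i-1} = a_i` and `w_{i-1} < w_i`. -/
def ContractibleValley {n : ℕ} (P : PathData n) (i : ℕ) : Prop :=
  2 ≤ i ∧ i ≤ n ∧ (aw P i < aw P (i - 1) ∨ (aw P (i - 1) = aw P i ∧ lbl P (i - 1) < lbl P i))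

instance {n : ℕ} (P : PathData n) (i : ℕ) : Decidable (ContractibleValley P i) := by
  unfold ContractibleValley; infer_instance

/-- `P` encodes a genuine valley-decorated standardly labelled Dyck path:
the area word is valid, labels in a common column increase from bottom to top
(equivalently, consecutive north steps carry increasing labels), and every
decoration sits on a contractible valley. -/
def IsValidPath {n : ℕ} (P : PathData n) : Prop :=
  (1 ≤ n → aw P 1 = 0) ∧
  (∀ i ∈ Finset.Icc 2 n, aw P i ≤ aw P (i - 1) + 1) ∧
  (∀ i ∈ Finset.Icc 2 n, aw P i = aw P (i - 1) + 1 → lbl P (i - 1) < lbl P i) ∧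
  (∀ i ∈ Finset.Icc 1 n, pdec P i = true → ContractibleValley P i)

instance {n : ℕ} (P : PathData n) : Decidable (IsValidPath P) := by
  unfold IsValidPath; infer_instance

/-- The finset `stLD(n)^{•k}` of valley-decorated standardly labelled Dyck paths
of size `n` with exactly `k` decorated (contractible) valleys. -/
def stLD (n k : ℕ) : Finset (PathData n) :=
  Finset.univ.filter fun P => IsValidPath P ∧ P.2.2.card = k

/-- The area statistic. -/
def area {n : ℕ} (P : PathData n) : ℕ := ∑ i ∈ Finset.Icc 1 n, aw P i

/-- `(i,j)` is a primary diagonal inversion. -/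
def PrimaryDinv {n : ℕ} (P : PathData n) (i j : ℕ) : Prop :=
  aw P i = aw P j ∧ lbl P i < lbl P j ∧ pdec P i = false

/-- `(i,j)` is a secondary diagonal inversion. -/
def SecondaryDinv {n : ℕ} (P : PathData n) (i j : ℕ) : Prop :=
  aw P i = aw P j + 1 ∧ lbl P j < lbl P i ∧ pdec P i = false

instance {n : ℕ} (P : PathData n) (i j : ℕ) : Decidable (PrimaryDinv P i j) := by
  unfold PrimaryDinv; infer_instance
instance {n : ℕ} (P : PathData n) (i j : ℕ) : Decidable (SecondaryDinv P i j) := by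
  unfold SecondaryDinv; infer_instance

/-- The set of diagonal-inversion pairs `(i,j)`, `1 ≤ i < j ≤ n`. -/
def dinvPairs {n : ℕ} (P : PathData n) : Finset (ℕ × ℕ) :=
  (Finset.Icc 1 n ×ˢ Finset.Icc 1 n).filter fun p =>
    p.1 < p.2 ∧ (PrimaryDinv P p.1 p.2 ∨ SecondaryDinv P p.1 p.2)

/-- `dinv(P)`: number of primary and secondary diagonal inversions minus the
number of decorated valleys (a nonnegative quantity). -/
def dinv {n : ℕ} (P : PathData n) : ℕ := (dinvPairs P).card - P.2.2.card

/-! ### The diagonal word of a path -/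

/-- Position in the diagonal word of the label of the `i`-th north step:
labels are listed diagonal by diagonal, and within a diagonal in decreasing order. -/
def dwPos {n : ℕ} (P : PathData n) (i : ℕ) : ℕ :=
  ((Finset.Icc 1 n).filter fun i' =>
    aw P i' < aw P i ∨ (aw P i' = aw P i ∧ lbl P i ≤ lbl P i')).card

/-- The `j`-th letter of the diagonal word `dw(P)`. -/
def dwEnt {n : ℕ} (P : PathData n) (j : ℕ) : ℕ :=
  ∑ i ∈ (Finset.Icc 1 n).filter (fun i => dwPos P i = j), lbl P i

/-- Whether the `j`-th letter of the diagonal word is decorated. -/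
def dwDec {n : ℕ} (P : PathData n) (j : ℕ) : Bool :=
  decide (((Finset.Icc 1 n).filter fun i => dwPos P i = j ∧ pdec P i = true).Nonempty)

end QEuler

namespace QEuler

/-- All schedule numbers of the decorated permutation equal `1`. -/
def HasSchedOne (n : ℕ) (E : ℕ → ℕ) (D : ℕ → Bool) : Prop :=
  ∀ i ∈ Finset.Icc 1 n, schedNum n E D i = 1

instance (n : ℕ) (E : ℕ → ℕ) (D : ℕ → Bool) : Decidable (HasSchedOne n E D) := by
  unfold HasSchedOne; infer_instance

/-- The diagonal word of `P` is the decorated permutation `(σ, D)`. -/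
def DwEq {n : ℕ} (P : PathData n) (σ : Equiv.Perm (Fin n)) (D : Finset (Fin n)) : Prop :=
  (∀ j ∈ Finset.Icc 1 n, dwEnt P j = ent σ j) ∧ ∀ j ∈ Finset.Icc 1 n, dwDec P j = isDec D j

instance {n : ℕ} (P : PathData n) (σ : Equiv.Perm (Fin n)) (D : Finset (Fin n)) :
    Decidable (DwEq P σ D) := by
  unfold DwEq; infer_instance

end QEuler

open QEuler

namespace QEuler

/-! ### Words -/

/-- `E` restricted to the positions `0, …, n` is the word `σ₀σ₁⋯σ_n` of a permutation: `σ₀ = 0`,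
and the entries are distinct elements of `{0, …, n}`. -/
structure IsWord (n : ℕ) (E : ℕ → ℕ) : Prop where
  zero : E 0 = 0
  pos : ∀ i, 1 ≤ i → i ≤ n → 0 < E i
  le : ∀ i, E i ≤ n
  inj : ∀ i j, i ≤ n → j ≤ n → E i = E j → i = j

lemma ent_succ {n : ℕ} (σ : Equiv.Perm (Fin n)) (i : Fin n) :
    ent σ (i + 1) = (σ i : ℕ) + 1 := by
  have : (i : ℕ) + 1 ≤ n := i.2
  simp [ent, this]

lemma isWord_ent {n : ℕ} (σ : Equiv.Perm (Fin n)) : IsWord n (ent σ) := by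
  refine ⟨by simp [ent], ?_, ?_, ?_⟩
  · intro i h1 h2
    simp [ent, h1, h2]
  · intro i
    unfold ent
    split_ifs <;> omega
  · intro i j hi hj h
    unfold ent at h
    split_ifs at h with h1 h2 h2
    · have h3 := σ.injective (Fin.ext (Nat.succ_injective h))
      have := congrArg Fin.val h3
      simp only at this
      omega
    all_goals omega

/-- The relative orders of the prefixes `E 0, …, E k` and `F 0, …, F k` agree. -/
def SamePat (E F : ℕ → ℕ) (k : ℕ) : Prop :=
  ∀ i j, i ≤ k → j ≤ k → (E i < E j ↔ F i < F j)

lemma SamePat.succ {n k : ℕ} {E F : ℕ → ℕ} (hE : IsWord n E) (hF : IsWord n F) (hk : k + 1 ≤ n)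
    (h : SamePat E F k) (h' : ∀ j ≤ k, (E j < E (k + 1) ↔ F j < F (k + 1))) :
    SamePat E F (k + 1) := by
  intro i j hi hj
  rcases Nat.lt_or_ge k i with h1 | h1 <;> rcases Nat.lt_or_ge k j with h2 | h2
  · obtain rfl : i = k + 1 := by omega
    obtain rfl : j = k + 1 := by omega
    simp
  · obtain rfl : i = k + 1 := by omega
    have a := h' j h2
    have b := hE.inj (k + 1) j hk (by omega)
    have c := hF.inj (k + 1) j hk (by omega)
    omega
  · obtain rfl : j = k + 1 := by omega
    exact h' i h1
  · exact h i j h1 h2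

lemma eq_of_samePat {n : ℕ} {σ τ : Equiv.Perm (Fin n)} (h : SamePat (ent σ) (ent τ) n) :
    σ = τ := by
  have key : ∀ i j : Fin n, τ i ≤ τ j ↔ σ i ≤ σ j := by
    intro i j
    have := h (j + 1) (i + 1) j.2 i.2
    simp only [ent_succ] at this
    rw [Fin.le_def, Fin.le_def]
    omega
  -- `σ⁻¹` followed by `τ` is an order automorphism of `Fin n`, hence trivial
  let e : Fin n ≃o Fin n := ⟨σ.symm.trans τ, by intro a b; simp [key]⟩
  have he : e = OrderIso.refl _ := Subsingleton.elim _ _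
  ext i
  have := congrArg (fun f : Fin n ≃o Fin n => f (σ i)) he
  simp [e] at this
  rw [this]

/-! ### Two facts on ranks -/

/-- If `f` and `g` order `s` in the same way, then an element inserted at a given rank is compared
in the same way to all of `s`. -/
lemma lt_iff_of_card_eq {s : Finset ℕ} {f g : ℕ → ℕ} {x y : ℕ}
    (hfg : ∀ i ∈ s, ∀ j ∈ s, (f i < f j ↔ g i < g j))
    (hx : ∀ i ∈ s, f i ≠ x) (hy : ∀ i ∈ s, g i ≠ y)
    (hc : (s.filter fun j => f j < x).card = (s.filter fun j => g j < y).card) :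
    ∀ i ∈ s, (f i < x ↔ g i < y) := by
  intro i hi
  constructor
  · intro h
    by_contra h'
    refine absurd hc (ne_of_gt (Finset.card_lt_card ?_))
    rw [Finset.ssubset_iff_of_subset]
    · exact ⟨i, by simp [hi, h], by simp [h']⟩
    · intro j hj
      simp only [Finset.mem_filter] at hj ⊢
      have := hfg j hj.1 i hi
      have := hy i hi
      exact ⟨hj.1, by omega⟩
  · intro h
    by_contra h'
    refine absurd hc (ne_of_lt (Finset.card_lt_card ?_))
    rw [Finset.ssubset_iff_of_subset]
    · exact ⟨i, by simp [hi, h], by simp [h']⟩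
    · intro j hj
      simp only [Finset.mem_filter] at hj ⊢
      have := hfg j hj.1 i hi
      have := hx i hi
      exact ⟨hj.1, by omega⟩

lemma card_le_iff_lt {s : Finset ℕ} {f : ℕ → ℕ} {i z : ℕ} (hi : i ∈ s) (hz : z ≠ f i) :
    (s.filter fun j => f j < z).card ≤ (s.filter fun j => f j < f i).card ↔ z < f i := by
  constructor
  · intro h
    by_contra h'
    refine absurd h (not_le_of_gt (Finset.card_lt_card ?_))
    rw [Finset.ssubset_iff_of_subset]
    · exact ⟨i, by simp only [Finset.mem_filter]; exact ⟨hi, by omega⟩, by simp⟩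
    · intro j hj
      simp only [Finset.mem_filter] at hj ⊢
      exact ⟨hj.1, by omega⟩
  · intro h
    apply Finset.card_le_card
    intro j hj
    simp only [Finset.mem_filter] at hj ⊢
    exact ⟨hj.1, by omega⟩

/-! ### Codes of circular words -/

/-- The triple `E i, E (i + 1), E (i + 2)` is positively oriented on the circle. -/
def CycAt (E : ℕ → ℕ) (i : ℕ) : Prop :=
  (E i < E (i + 1) ∧ (E (i + 1) < E (i + 2) ∨ E (i + 2) < E i)) ∨
  (E (i + 1) < E (i + 2) ∧ E (i + 2) < E i)

/-- The distance travelled from `a` to `v` in the positive direction on the circle `ℤ/(n+1)`. -/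
def arc (n a v : ℕ) : ℕ := if a ≤ v then v - a else v + (n + 1) - a

/-- The number of `j < k` such that `E j` lies in the open arc from `E k` to `E (k + 1)`. -/
def codeC (n : ℕ) (E : ℕ → ℕ) (k : ℕ) : ℕ :=
  ((Finset.range k).filter fun j => arc n (E k) (E j) < arc n (E k) (E (k + 1))).card

lemma codeC_le (n : ℕ) (E : ℕ → ℕ) (k : ℕ) : codeC n E k < k + 1 := by
  have := Finset.card_filter_le (Finset.range k)
    fun j => arc n (E k) (E j) < arc n (E k) (E (k + 1))
  rw [Finset.card_range] at this
  unfold codeC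
  omega

lemma codeC_cond {n : ℕ} {E : ℕ → ℕ} (hE : IsWord n E) {i : ℕ} (hi : i + 2 ≤ n) :
    codeC n E (i + 1) + codeC n E i < i + 1 ↔ CycAt E i := by
  have b0 := hE.le i
  have b1 := hE.le (i + 1)
  have b2 := hE.le (i + 2)
  have n01 := hE.inj i (i + 1) (by omega) (by omega)
  have n02 := hE.inj i (i + 2) (by omega) (by omega)
  have n12 := hE.inj (i + 1) (i + 2) (by omega) (by omega)
  -- an earlier point off the arc from `E i` to `E (i + 1)` is on the complementary arc
  have hcompl : codeC n E i + ((Finset.range (i + 1)).filter fun j =>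
      arc n (E (i + 1)) (E j) < arc n (E (i + 1)) (E i)).card = i := by
    have h := Finset.card_filter_add_card_filter_not (s := Finset.range i)
      (fun j => arc n (E i) (E j) < arc n (E i) (E (i + 1)))
    rw [Finset.card_range] at h
    unfold codeC
    rw [Finset.range_add_one, Finset.filter_insert, if_neg (lt_irrefl _)]
    convert h using 3
    apply Finset.filter_congr
    intro j hj
    rw [Finset.mem_range] at hj
    have bj := hE.le j
    have m0 := hE.inj j i (by omega) (by omega)
    have m1 := hE.inj j (i + 1) (by omega) (by omega)
    unfold arc
    split_ifs <;> omega
  have hrank := card_le_iff_lt (s := Finset.range (i + 1))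
    (f := fun j => arc n (E (i + 1)) (E j)) (i := i) (z := arc n (E (i + 1)) (E (i + 2)))
    (by simp) (by unfold arc; split_ifs <;> omega)
  have hcyc : arc n (E (i + 1)) (E (i + 2)) < arc n (E (i + 1)) (E i) ↔ CycAt E i := by
    unfold arc CycAt
    split_ifs <;> omega
  rw [← hcyc, ← hrank]
  unfold codeC at *
  rw [show i + 1 + 1 = i + 2 from rfl]
  omega

/-- Given the relative order of `E 0, …, E k`, the number `codeC n E k` determines that of
`E 0, …, E (k + 1)`: it is the rank of the new point among the earlier ones in the linear order
obtained by cutting the circle at `E k`. -/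
lemma samePat_of_codeC {n : ℕ} {E F : ℕ → ℕ} (hE : IsWord n E) (hF : IsWord n F)
    (h : ∀ k < n, codeC n E k = codeC n F k) : ∀ k ≤ n, SamePat E F k := by
  intro k
  induction k with
  | zero =>
    intro _ i j hi hj
    obtain rfl : i = 0 := by omega
    obtain rfl : j = 0 := by omega
    simp
  | succ k ih =>
    intro hk
    have hp := ih (by omega)
    refine hp.succ hE hF hk ?_
    have e1 := hE.le k
    have e2 := hE.le (k + 1)
    have f1 := hF.le k
    have f2 := hF.le (k + 1)
    have n1 := hE.inj k (k + 1) (by omega) (by omega)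
    have n2 := hF.inj k (k + 1) (by omega) (by omega)
    have hlt := lt_iff_of_card_eq (s := Finset.range k) (f := fun j => arc n (E k) (E j))
      (g := fun j => arc n (F k) (F j)) ?_ ?_ ?_ (h k hk)
    · rcases Nat.eq_zero_or_pos k with rfl | hk0
      · intro j hj
        obtain rfl : j = 0 := by omega
        have := hE.pos 1 (by omega) (by omega)
        have := hF.pos 1 (by omega) (by omega)
        have := hE.zero
        have := hF.zero
        simp only [zero_add]
        omega
      ·
        -- comparing with `E 0 = 0` tells whether the arc to the new point passes through `0`
        have h0 := hlt 0 (by simpa using hk0)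
        have := hE.zero
        have := hF.zero
        have := hE.pos k hk0 (by omega)
        have := hF.pos k hk0 (by omega)
        have := hE.pos (k + 1) (by omega) hk
        have := hF.pos (k + 1) (by omega) hk
        have hw : E k < E (k + 1) ↔ F k < F (k + 1) := by
          simp only [arc] at h0
          split_ifs at h0 <;> omega
        intro j hj
        rcases Nat.lt_or_ge j k with hjk | hjk
        · have hj' := hlt j (by simpa using hjk)
          have := hp j k (by omega) le_rfl
          have := hE.le j
          have := hF.le j
          have := hE.inj j k (by omega) (by omega)
          have := hF.inj j k (by omega) (by omega)
          simp only [arc] at hj'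
          clear h0 hlt
          split_ifs at hj' <;> omega
        · obtain rfl : j = k := by omega
          exact hw
    · intro i hi j hj
      rw [Finset.mem_range] at hi hj
      have := hp i j (by omega) (by omega)
      have := hp i k (by omega) (by omega)
      have := hp j k (by omega) (by omega)
      have := hE.le j
      have := hF.le j
      have := hE.le i
      have := hF.le i
      simp only [arc]
      split_ifs <;> omega
    · intro i hi
      rw [Finset.mem_range] at hi
      have := hE.inj i (k + 1) (by omega) hk
      have := hE.le i
      simp only [arc]
      split_ifs <;> omega
    · intro i hi
      rw [Finset.mem_range] at hi
      have := hF.inj i (k + 1) (by omega) hk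
      have := hF.le i
      simp only [arc]
      split_ifs <;> omega

/-! ### Codes of alternating words -/

/-- The identity or the order reversal `v ↦ n - v`, according to the parity of `k`. -/
def flipKey (n k v : ℕ) : ℕ := if Odd k then v else n - v

/-- The number of `j ∈ {1, …, k}` such that `E j` is smaller (`k` odd) or greater (`k` even)
than `E (k + 1)`. -/
def codeA (n : ℕ) (E : ℕ → ℕ) (k : ℕ) : ℕ :=
  ((Finset.Icc 1 k).filter fun j => flipKey n k (E j) < flipKey n k (E (k + 1))).card

lemma codeA_le (n : ℕ) (E : ℕ → ℕ) (k : ℕ) : codeA n E k < k + 1 := by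
  have := Finset.card_filter_le (Finset.Icc 1 k)
    fun j => flipKey n k (E j) < flipKey n k (E (k + 1))
  rw [Nat.card_Icc] at this
  unfold codeA
  omega

lemma codeA_cond {n : ℕ} {E : ℕ → ℕ} (hE : IsWord n E) {i : ℕ} (hi : i + 2 ≤ n) :
    codeA n E (i + 1) + codeA n E i < i + 1 ↔
      if Odd (i + 1) then E (i + 2) < E (i + 1) else E (i + 1) < E (i + 2) := by
  have b1 := hE.le (i + 1)
  have b2 := hE.le (i + 2)
  have n12 := hE.inj (i + 1) (i + 2) (by omega) (by omega)
  have hpar : Odd (i + 1) ↔ ¬ Odd i := Nat.odd_add_one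
  have hcompl : codeA n E i + ((Finset.Icc 1 (i + 1)).filter fun j =>
      flipKey n (i + 1) (E j) < flipKey n (i + 1) (E (i + 1))).card = i := by
    have h := Finset.card_filter_add_card_filter_not (s := Finset.Icc 1 i)
      (fun j => flipKey n i (E j) < flipKey n i (E (i + 1)))
    rw [Nat.card_Icc, Nat.add_sub_cancel] at h
    unfold codeA
    rw [← Finset.insert_Icc_right_eq_Icc_add_one (by omega), Finset.filter_insert,
      if_neg (lt_irrefl _)]
    convert h using 3
    apply Finset.filter_congr
    intro j hj
    rw [Finset.mem_Icc] at hj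
    have bj := hE.le j
    have m1 := hE.inj j (i + 1) (by omega) (by omega)
    simp only [flipKey, hpar]
    split_ifs <;> omega
  have hrank := card_le_iff_lt (s := Finset.Icc 1 (i + 1))
    (f := fun j => flipKey n (i + 1) (E j)) (i := i + 1) (z := flipKey n (i + 1) (E (i + 2)))
    (by simp) (by unfold flipKey; split_ifs <;> omega)
  have halt : flipKey n (i + 1) (E (i + 2)) < flipKey n (i + 1) (E (i + 1)) ↔
      if Odd (i + 1) then E (i + 2) < E (i + 1) else E (i + 1) < E (i + 2) := by
    unfold flipKey
    split_ifs <;> omega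
  rw [← halt, ← hrank]
  unfold codeA at *
  rw [show i + 1 + 1 = i + 2 from rfl]
  omega

/-- Given the relative order of `E 1, …, E k`, the number `codeA n E k` is the rank of the new
entry `E (k + 1)`, in the usual or in the reversed order. -/
lemma samePat_of_codeA {n : ℕ} {E F : ℕ → ℕ} (hE : IsWord n E) (hF : IsWord n F)
    (h : ∀ k < n, codeA n E k = codeA n F k) : ∀ k ≤ n, SamePat E F k := by
  intro k
  induction k with
  | zero =>
    intro _ i j hi hj
    obtain rfl : i = 0 := by omega
    obtain rfl : j = 0 := by omega
    simp
  | succ k ih =>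
    intro hk
    have hp := ih (by omega)
    refine hp.succ hE hF hk ?_
    have e2 := hE.le (k + 1)
    have f2 := hF.le (k + 1)
    have hlt := lt_iff_of_card_eq (s := Finset.Icc 1 k) (f := fun j => flipKey n k (E j))
      (g := fun j => flipKey n k (F j)) ?_ ?_ ?_ (h k hk)
    · intro j hj
      rcases Nat.eq_zero_or_pos j with rfl | hj0
      · have := hE.pos (k + 1) (by omega) (by omega)
        have := hF.pos (k + 1) (by omega) (by omega)
        have := hE.zero
        have := hF.zero
        omega
      · have hj' := hlt j (by simp; omega)
        have := hE.le j
        have := hF.le j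
        have := hE.inj j (k + 1) (by omega) hk
        have := hF.inj j (k + 1) (by omega) hk
        simp only [flipKey] at hj'
        split_ifs at hj' <;> omega
    · intro i hi j hj
      rw [Finset.mem_Icc] at hi hj
      have := hp i j (by omega) (by omega)
      have := hp j i (by omega) (by omega)
      have := hE.le j
      have := hF.le j
      have := hE.le i
      have := hF.le i
      simp only [flipKey]
      split_ifs <;> omega
    · intro i hi
      rw [Finset.mem_Icc] at hi
      have := hE.inj i (k + 1) (by omega) hk
      have := hE.le i
      simp only [flipKey]
      split_ifs <;> omega
    · intro i hi
      rw [Finset.mem_Icc] at hi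
      have := hF.inj i (k + 1) (by omega) hk
      have := hF.le i
      simp only [flipKey]
      split_ifs <;> omega

/-! ### Schedule numbers -/

lemma decOn_runStart (E : ℕ → ℕ) (i : ℕ) : decOn E (runStart E i) i :=
  Nat.find_spec (p := fun p => decOn E p i) _

lemma runStart_le_of_decOn {E : ℕ → ℕ} {p i : ℕ} (h : decOn E p i) : runStart E i ≤ p :=
  Nat.find_min' _ h

lemma runStart_le (E : ℕ → ℕ) (i : ℕ) : runStart E i ≤ i :=
  runStart_le_of_decOn fun t ht => absurd ht (by simp)

lemma runStart_succ_of_lt {E : ℕ → ℕ} {i : ℕ} (h : E i < E (i + 1)) :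
    runStart E (i + 1) = i + 1 := by
  have h1 := runStart_le E (i + 1)
  by_contra h2
  have := decOn_runStart E (i + 1) i (by simp; omega)
  omega

lemma runStart_succ_of_gt {E : ℕ → ℕ} {i : ℕ} (h : E (i + 1) < E i) :
    runStart E (i + 1) = runStart E i := by
  have h0 := runStart_le E i
  apply le_antisymm
  · apply runStart_le_of_decOn
    intro t ht
    rw [Finset.mem_Ico] at ht
    rcases Nat.lt_or_ge t i with h1 | h1
    · exact decOn_runStart E i t (by simp; omega)
    · obtain rfl : t = i := by omega
      exact h
  · apply runStart_le_of_decOn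
    intro t ht
    rw [Finset.mem_Ico] at ht
    exact decOn_runStart E (i + 1) t (by simp; omega)

lemma decOn_runEnd {n : ℕ} (E : ℕ → ℕ) {i : ℕ} (hi : i ≤ n) :
    i ≤ runEnd n E i ∧ decOn E i (runEnd n E i) := by
  have h : decOn E i i := fun t ht => absurd ht (by simp)
  exact ⟨Nat.le_findGreatest hi h, Nat.findGreatest_spec (P := fun q => decOn E i q) hi h⟩

lemma decOn.lt {E : ℕ → ℕ} {p q : ℕ} (h : decOn E p q) {a b : ℕ} (hpa : p ≤ a) (hab : a < b)
    (hbq : b ≤ q) : E b < E a := by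
  induction b, hab using Nat.le_induction with
  | base => exact h a (by simp; omega)
  | succ b hb ih =>
    have := h b (by simp; omega)
    have := ih (by omega)
    omega

/-- In the run of `E i` the entries larger than `E i` are exactly those on its left. -/
lemma schedNum_eq {n : ℕ} {E : ℕ → ℕ} {i : ℕ} (hi : i ≤ n) (h0 : runStart E i ≠ 0) :
    schedNum n E (fun _ => false) i = (i - runStart E i) +
      ((Finset.Icc (runStart E (runStart E i - 1)) (runStart E i - 1)).filter
        fun t => E t < E i).card := by
  obtain ⟨h1, h2⟩ := decOn_runEnd E hi
  have h3 := runStart_le E i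
  have h4 := decOn_runStart E i
  have : (Finset.Icc (runStart E i) (runEnd n E i)).filter (fun t => E i < E t)
      = Finset.Ico (runStart E i) i := by
    ext t
    simp only [Finset.mem_filter, Finset.mem_Icc, Finset.mem_Ico]
    constructor
    · rintro ⟨⟨ha, hb⟩, hc⟩
      refine ⟨ha, ?_⟩
      by_contra hd
      rcases Nat.eq_or_lt_of_le (not_lt.mp hd) with rfl | he
      · omega
      · have := h2.lt le_rfl he hb
        omega
    · rintro ⟨ha, hb⟩
      exact ⟨⟨ha, by omega⟩, h4.lt ha hb le_rfl⟩
  simp [schedNum, h0, this]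

lemma runStart_ne_zero {n : ℕ} {E : ℕ → ℕ} (hE : IsWord n E) {i : ℕ} (h1 : 1 ≤ i) :
    runStart E i ≠ 0 := by
  intro h
  have h2 := decOn_runStart E i
  rw [h] at h2
  have := h2 0 (by simp; omega)
  have := hE.zero
  omega

/-- If all schedule numbers are `1`, a run has at most two entries, and exactly one entry of the
previous run is smaller than the first entry of a run and none is smaller than the second. This is
the orientation condition on consecutive triples; it is vacuous for `n ≤ 1`. -/
lemma schedOne_iff {n : ℕ} {E : ℕ → ℕ} (hE : IsWord n E) :
    HasSchedOne n E (fun _ => false) ↔ ∀ i, i + 2 ≤ n → CycAt E i := by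
  have hs : ∀ i, 1 ≤ i → i ≤ n → schedNum n E (fun _ => false) i = (i - runStart E i) +
      ((Finset.Icc (runStart E (runStart E i - 1)) (runStart E i - 1)).filter
        fun t => E t < E i).card := fun i h1 h2 => schedNum_eq h2 (runStart_ne_zero hE h1)
  constructor
  · intro h i hi
    have n01 := hE.inj i (i + 1) (by omega) (by omega)
    have n02 := hE.inj i (i + 2) (by omega) (by omega)
    have n12 := hE.inj (i + 1) (i + 2) (by omega) (by omega)
    have s1 := h (i + 1) (by simp; omega)
    have s2 := h (i + 2) (by simp; omega)
    rw [hs _ (by omega) (by omega)] at s1 s2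
    rcases Nat.lt_or_ge (E i) (E (i + 1)) with hlt | hge
    · left
      refine ⟨hlt, ?_⟩
      by_contra hcon
      have hd : E (i + 1 + 1) < E (i + 1) := by
        rw [show i + 1 + 1 = i + 2 by omega]; omega
      have e2 : runStart E (i + 2) = i + 1 := by
        rw [runStart_succ_of_gt hd, runStart_succ_of_lt hlt]
      rw [e2] at s2
      have : i ∈ (Finset.Icc (runStart E (i + 1 - 1)) (i + 1 - 1)).filter
          fun t => E t < E (i + 2) := by
        simp only [Nat.add_sub_cancel, Finset.mem_filter, Finset.mem_Icc]
        exact ⟨⟨runStart_le E i, le_rfl⟩, by omega⟩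
      have := Finset.card_pos.mpr ⟨i, this⟩
      omega
    · have hd : E (i + 1) < E i := by omega
      have hr := runStart_le E i
      have e1 := runStart_succ_of_gt hd
      rw [e1] at s1
      have e0 : runStart E i = i := by omega
      rcases Nat.lt_or_ge (E (i + 1)) (E (i + 2)) with hlt' | hge'
      · right
        refine ⟨hlt', ?_⟩
        by_contra hcon
        have e2 : runStart E (i + 2) = i + 2 := runStart_succ_of_lt hlt'
        rw [e2, show i + 2 - 1 = i + 1 by omega, e1, e0] at s2
        have hsub : Finset.Icc i (i + 1) ⊆ (Finset.Icc i (i + 1)).filter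
            fun t => E t < E (i + 2) := by
          intro t ht
          rw [Finset.mem_filter]
          refine ⟨ht, ?_⟩
          rw [Finset.mem_Icc] at ht
          rcases (by omega : t = i ∨ t = i + 1) with rfl | rfl <;> omega
        have := Finset.card_le_card hsub
        rw [Nat.card_Icc] at this
        omega
      · have hd' : E (i + 1 + 1) < E (i + 1) := by
          rw [show i + 1 + 1 = i + 2 by omega]; omega
        have e2 : runStart E (i + 2) = i := by
          rw [runStart_succ_of_gt hd', e1, e0]
        rw [e2] at s2
        omega
  · intro h
    -- runs have length at most two
    have hrun : ∀ i ≤ n, runStart E i = i ∨ ∃ j, i = j + 1 ∧ runStart E i = j ∧ E i < E j ∧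
        runStart E j = j := by
      intro i hi
      rcases i with _ | j
      · left
        have := runStart_le E 0
        omega
      · rcases Nat.lt_or_ge (E j) (E (j + 1)) with hlt | hge
        · exact Or.inl (runStart_succ_of_lt hlt)
        · right
          have := hE.inj j (j + 1) (by omega) (by omega)
          have hd : E (j + 1) < E j := by omega
          have e : runStart E j = j := by
            rcases j with _ | k
            · have := runStart_le E 0
              omega
            · have hc := h k hi
              apply runStart_succ_of_lt
              simp only [CycAt] at hc
              rw [show k + 1 + 1 = k + 2 by omega] at hd
              omega
          exact ⟨j, rfl, by rw [runStart_succ_of_gt hd, e], hd, e⟩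
    intro i hi
    rw [Finset.mem_Icc] at hi
    rw [hs i hi.1 hi.2]
    rcases hrun i hi.2 with e | ⟨j, rfl, e, hd, -⟩
    ·
      -- `E i` starts a run: only the last entry of the previous run is smaller
      obtain ⟨k, rfl⟩ : ∃ k, i = k + 1 := ⟨i - 1, by omega⟩
      have hlt : E k < E (k + 1) := by
        by_contra hcon
        have := hE.inj k (k + 1) (by omega) (by omega)
        have := runStart_succ_of_gt (E := E) (i := k) (by omega)
        have := runStart_le E k
        omega
      rw [e, Nat.sub_self, Nat.add_sub_cancel, zero_add, Finset.card_eq_one]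
      refine ⟨k, ?_⟩
      ext t
      simp only [Finset.mem_filter, Finset.mem_Icc, Finset.mem_singleton]
      constructor
      · rintro ⟨⟨ha, hb⟩, hc⟩
        rcases hrun k (by omega) with e2 | ⟨l, rfl, e2, hd2, -⟩
        · omega
        · have hcyc := h l hi.2
          simp only [CycAt] at hcyc
          rw [show l + 1 + 1 = l + 2 by omega] at hc hlt
          by_contra hne
          obtain rfl : t = l := by omega
          omega
      · rintro rfl
        exact ⟨⟨runStart_le E t, le_rfl⟩, hlt⟩
    ·
      -- `E i` ends a run of length two: no entry of the previous run is smaller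
      have hj := runStart_ne_zero hE hi.1
      rw [e] at hj
      obtain ⟨k, rfl⟩ : ∃ k, j = k + 1 := ⟨j - 1, by omega⟩
      have hcyc := h k hi.2
      have hcyc' : E (k + 1 + 1) < E k := by
        simp only [CycAt] at hcyc
        rw [show k + 1 + 1 = k + 2 by omega] at *
        omega
      rw [e, Nat.add_sub_cancel, Nat.add_sub_cancel_left, Finset.filter_eq_empty_iff.mpr]
      · simp
      · intro t ht
        rw [Finset.mem_Icc] at ht
        rcases Nat.eq_or_lt_of_le ht.2 with rfl | hlt
        · omega
        · have := (decOn_runStart E k).lt ht.1 hlt le_rfl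
          omega

/-! ### The bijection -/

/-- The codes: sequences `c_0, …, c_{n-1}` with `0 ≤ c_k ≤ k`. -/
abbrev Code (n : ℕ) := ∀ k : Fin n, Fin ((k : ℕ) + 1)

lemma card_perm_eq_card_code (n : ℕ) :
    Fintype.card (Equiv.Perm (Fin n)) = Fintype.card (Code n) := by
  rw [Fintype.card_perm, Fintype.card_fin, Fintype.card_pi]
  simp only [Fintype.card_fin]
  rw [Fin.prod_univ_eq_prod_range (fun k => k + 1), Finset.prod_range_add_one_eq_factorial]

lemma bijective_codeC (n : ℕ) : Function.Bijective
    fun (σ : Equiv.Perm (Fin n)) => (fun k => ⟨codeC n (ent σ) k, codeC_le _ _ _⟩ : Code n) := by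
  rw [Fintype.bijective_iff_injective_and_card]
  refine ⟨fun σ τ h => ?_, card_perm_eq_card_code n⟩
  refine eq_of_samePat (samePat_of_codeC (isWord_ent σ) (isWord_ent τ) (fun k hk => ?_) n le_rfl)
  exact congrArg Fin.val (congrFun h ⟨k, hk⟩)

lemma bijective_codeA (n : ℕ) : Function.Bijective
    fun (σ : Equiv.Perm (Fin n)) => (fun k => ⟨codeA n (ent σ) k, codeA_le _ _ _⟩ : Code n) := by
  rw [Fintype.bijective_iff_injective_and_card]
  refine ⟨fun σ τ h => ?_, card_perm_eq_card_code n⟩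
  refine eq_of_samePat (samePat_of_codeA (isWord_ent σ) (isWord_ent τ) (fun k hk => ?_) n le_rfl)
  exact congrArg Fin.val (congrFun h ⟨k, hk⟩)

lemma isAlternating_iff {n : ℕ} {E : ℕ → ℕ} (hE : IsWord n E) :
    IsAlternating n E ↔ ∀ i, i + 2 ≤ n → codeA n E (i + 1) + codeA n E i < i + 1 := by
  constructor
  · intro h i hi
    exact (codeA_cond hE hi).mpr (h (i + 1) (by simp; omega))
  · intro h i hi
    rw [Finset.mem_Icc] at hi
    obtain ⟨k, rfl⟩ : ∃ k, i = k + 1 := ⟨i - 1, by omega⟩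
    exact (codeA_cond hE (by omega)).mp (h k (by omega))

end QEuler

/-- The number of (undecorated) permutations `σ ∈ S_n` whose schedule
numbers are all equal to `1` equals the number of alternating permutations of `{1,…,n}`,
i.e. the Euler number `E_n`. -/
theorem sched_one_count_eq_euler (n : ℕ) :
    ((Finset.univ : Finset (Equiv.Perm (Fin n))).filter fun σ =>
        HasSchedOne n (ent σ) fun _ => false).card
      = (altPerms n).card := by
  let eA := Equiv.ofBijective _ (bijective_codeA n)
  let e := (Equiv.ofBijective _ (bijective_codeC n)).trans eA.symm
  have he : ∀ σ, ∀ k < n, codeC n (ent σ) k = codeA n (ent (e σ)) k := by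
    intro σ k hk
    have h : eA (e σ) = _ := eA.apply_symm_apply _
    exact (congrArg Fin.val (congrFun h ⟨k, hk⟩)).symm
  refine Finset.card_equiv e fun σ => ?_
  simp only [altPerms, Finset.mem_filter, Finset.mem_univ, true_and]
  rw [schedOne_iff (isWord_ent σ), isAlternating_iff (isWord_ent (e σ))]
  refine forall₂_congr fun i hi => ?_
  rw [← codeC_cond (isWord_ent σ) hi, he σ (i + 1) (by omega), he σ i (by omega)]
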